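/- Assume μ > 0, φ* = 1 and θ < 1. Then for every x ∈ ℕ₀: lim_{q↓0} Φ_q(x)/q = ∫_0^1 exp{−∫_θ^v μ(1 − r̃(w))/(λ(p̃(w) − w)) dw} v^x / (λ(p̃(v) − v)) dv, both sides taking values in (0,∞]. -/

import Mathlib

open MeasureTheory Filter Set

/-- The probability generating function of the offspring distribution `p`. -/
noncomputable def ptilde (p : ℕ → ℝ) (z : ℝ) : ℝ := ∑' k, p k * z ^ k

/-- The p.g.f. of the immigration/culling mechanism: `rneg` is `r_{-1}`,
`r k` for `k ≥ 1` are the immigration probabilities (we require `r 0 = 0`). -/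
noncomputable def rtilde (rneg : ℝ) (r : ℕ → ℝ) (z : ℝ) : ℝ :=
  rneg / z + ∑' k, r k * z ^ k

/-- `f : ℕ → ℝ` is `q`-harmonic for the branching process with branching mechanism `p`
(rate `lam`) and immigration/culling mechanism `(rneg, r)` (rate `mu`). -/
def IsQHarmonic (lam mu q : ℝ) (p : ℕ → ℝ) (rneg : ℝ) (r : ℕ → ℝ) (f : ℕ → ℝ) : Prop :=
  ∀ x : ℕ, 1 ≤ x →
    (q + lam * x + mu) * f x
      = lam * x * (∑' k, p k * f (x + k - 1))
        + mu * (rneg * f (x - 1) + ∑' k, r k * f (x + k))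

/-- The harmonic function `Φ_q`; `φ` is the smallest fixed point of `ptilde p` in `(0,1]`
and `θ` is the delimiter `θ_q`. -/
noncomputable def Phi (lam mu : ℝ) (p : ℕ → ℝ) (rneg : ℝ) (r : ℕ → ℝ)
    (φ θ q : ℝ) (x : ℕ) : ℝ :=
  q * ∫ v in (0:ℝ)..φ,
      Real.exp (-∫ w in θ..v,
          (q + mu * (1 - rtilde rneg r w)) / (lam * |ptilde p w - w|))
        / (lam * |ptilde p v - v|) * v ^ x

/-- The harmonic function `Ψ_q`. -/
noncomputable def Psi (lam mu : ℝ) (p : ℕ → ℝ) (rneg : ℝ) (r : ℕ → ℝ)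
    (φ q : ℝ) (x : ℕ) : ℝ :=
  1 - q * ∫ v in φ..(1:ℝ),
      Real.exp (-∫ w in v..(1:ℝ),
          (q + mu * (1 - rtilde rneg r w)) / (lam * |ptilde p w - w|))
        / (lam * |ptilde p v - v|) * v ^ x

/-- Condition (E'): `∫_v^1 dz/(z - ptilde p z) < ∞` for some `v ∈ (φ, 1)`. -/
def CondE (p : ℕ → ℝ) (φ : ℝ) : Prop :=
  ∃ v, φ < v ∧ v < 1 ∧
    IntervalIntegrable (fun z => 1 / (z - ptilde p z)) MeasureTheory.volume v 1

open Topology in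
lemma aux_core (J0 A k B : ℝ → ℝ) (C : ℝ)
    (hJ : ContinuousOn J0 (Ioo 0 1)) (hA : ContinuousOn A (Ioo 0 1))
    (hk : ContinuousOn k (Ioo 0 1)) (hkpos : ∀ v ∈ Ioo (0:ℝ) 1, 0 < k v)
    (hAC : ∀ v ∈ Ioo (0:ℝ) 1, -C ≤ A v)
    (hB : ∀ q : ℝ, 0 < q → 0 ≤ B q ∧ B q ≤ q * C) :
    Tendsto (fun q => ∫⁻ v in Ioo (0:ℝ) 1, ENNReal.ofReal (Real.exp (J0 v - q * A v - B q) * k v))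
      (𝓝[>] 0) (𝓝 (∫⁻ v in Ioo (0:ℝ) 1, ENNReal.ofReal (Real.exp (J0 v) * k v))) := by
  have hq0 : Tendsto (fun q : ℝ => q) (𝓝[>] 0) (𝓝 0) := tendsto_nhdsWithin_of_tendsto_nhds tendsto_id
  have hB0 : Tendsto B (𝓝[>] 0) (𝓝 0) := by
    refine tendsto_of_tendsto_of_tendsto_of_le_of_le' (g := fun _ => 0) (h := fun q => q * C)
      tendsto_const_nhds ?_ ?_ ?_
    · simpa using hq0.mul_const C
    · filter_upwards [self_mem_nhdsWithin] with q hq using (hB q hq).1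
    · filter_upwards [self_mem_nhdsWithin] with q hq using (hB q hq).2
  refine tendsto_of_le_liminf_of_limsup_le ?_ ?_
  · calc _ = ∫⁻ v in Ioo (0:ℝ) 1, liminf (fun q => ENNReal.ofReal (Real.exp (J0 v - q * A v - B q) * k v)) (𝓝[>] 0) := by
          refine lintegral_congr fun v => ?_
          refine (Tendsto.liminf_eq ?_).symm
          apply ENNReal.tendsto_ofReal
          refine Tendsto.mul_const _ ((Real.continuous_exp.tendsto _).comp ?_)
          simpa using (tendsto_const_nhds.sub (hq0.mul_const (A v))).sub hB0
      _ ≤ _ := by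
          apply lintegral_liminf_le'
          intro q
          apply AEMeasurable.ennreal_ofReal
          refine ContinuousOn.aemeasurable ?_ measurableSet_Ioo
          fun_prop
  · have hle : ∀ᶠ q in 𝓝[>] (0:ℝ), (∫⁻ v in Ioo (0:ℝ) 1, ENNReal.ofReal (Real.exp (J0 v - q * A v - B q) * k v))
        ≤ ENNReal.ofReal (Real.exp (q * C)) * ∫⁻ v in Ioo (0:ℝ) 1, ENNReal.ofReal (Real.exp (J0 v) * k v) := by
      filter_upwards [self_mem_nhdsWithin] with q hq
      rw [← lintegral_const_mul' _ _ ENNReal.ofReal_ne_top]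
      apply setLIntegral_mono' measurableSet_Ioo
      intro v hv
      rw [← ENNReal.ofReal_mul (Real.exp_pos _).le, ← mul_assoc, ← Real.exp_add]
      apply ENNReal.ofReal_le_ofReal
      apply mul_le_mul_of_nonneg_right _ (hkpos v hv).le
      apply Real.exp_le_exp.2
      have := (hB q hq).1
      have := mul_le_mul_of_nonneg_left (hAC v hv) (le_of_lt hq)
      linarith
    refine (limsup_le_limsup hle).trans ?_
    apply le_of_eq
    apply Tendsto.limsup_eq
    have : Tendsto (fun q : ℝ => ENNReal.ofReal (Real.exp (q * C))) (𝓝[>] 0) (𝓝 1) := by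
      have : Tendsto (fun q : ℝ => Real.exp (q * C)) (𝓝[>] 0) (𝓝 1) := by
        have := (Real.continuous_exp.tendsto _).comp (hq0.mul_const C)
        simpa [Function.comp_def] using this
      simpa using ENNReal.tendsto_ofReal this
    have h2 := ENNReal.Tendsto.mul_const (b := ∫⁻ v in Ioo (0:ℝ) 1, ENNReal.ofReal (Real.exp (J0 v) * k v)) this (Or.inl one_ne_zero)
    simpa using h2

lemma aux_pos (F : ℝ → ℝ) (hF : ContinuousOn F (Ioo 0 1)) (hp : ∀ v ∈ Ioo (0:ℝ) 1, 0 < F v) :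
    0 < ∫⁻ v in Ioo (0:ℝ) 1, ENNReal.ofReal (F v) := by
  rw [pos_iff_ne_zero]
  intro h
  rw [lintegral_eq_zero_iff' (hF.aemeasurable measurableSet_Ioo).ennreal_ofReal] at h
  have h2 := (ae_restrict_iff' measurableSet_Ioo).1 h
  have : volume (Ioo (0:ℝ) 1) = 0 := by
    refine measure_mono_null ?_ h2
    intro v hv
    simp [hp v hv, hv.1, hv.2]
  simp at this

lemma aux_hasDeriv (f : ℝ → ℝ) (S : Set ℝ) (hS : OrdConnected S) (h1 : Ioo 0 1 ⊆ S)
    (hf : ContinuousOn f S) (a v : ℝ) (ha : a ∈ S) (hv : v ∈ Ioo (0:ℝ) 1) :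
    HasDerivAt (fun u => ∫ w in a..u, f w) (f v) v := by
  have hf' := hf.mono h1
  exact intervalIntegral.integral_hasDerivAt_right
    ((hf.mono (hS.uIcc_subset ha (h1 hv))).intervalIntegrable)
    (hf'.stronglyMeasurableAtFilter isOpen_Ioo v hv) (hf'.continuousAt (isOpen_Ioo.mem_nhds hv))

/-- integrability of `exp(-qA)A'` -/
lemma aux_int (A k : ℝ → ℝ) (C q : ℝ) (hq : 0 < q)
    (hA : ∀ v ∈ Ioo (0:ℝ) 1, HasDerivAt A (k v) v)
    (hk : ContinuousOn k (Ioo 0 1)) (hkpos : ∀ v ∈ Ioo (0:ℝ) 1, 0 < k v)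
    (hAC : ∀ v ∈ Ioo (0:ℝ) 1, -C ≤ A v) :
    IntegrableOn (fun v => Real.exp (-(q * A v)) * k v) (Ioo 0 1) := by
  rw [← integrableOn_Ioc_iff_integrableOn_Ioo]
  have hAc : ContinuousOn A (Ioo 0 1) := fun v hv => (hA v hv).continuousAt.continuousWithinAt
  have hsub : ∀ n : ℕ, Icc (1/((n:ℝ)+2)) (1 - 1/((n:ℝ)+2)) ⊆ Ioo 0 1 := by
    intro n w hw
    have : 0 < 1/((n:ℝ)+2) := by positivity
    exact ⟨by linarith [hw.1], by linarith [hw.2]⟩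
  have hle : ∀ n : ℕ, 1/((n:ℝ)+2) ≤ 1 - 1/((n:ℝ)+2) := by
    intro n
    have : 1/((n:ℝ)+2) ≤ 1/2 := by
      have hn : (0:ℝ) ≤ n := by positivity
      exact one_div_le_one_div_of_le (by norm_num) (by linarith)
    linarith
  have hcont : ContinuousOn (fun v => Real.exp (-(q * A v)) * k v) (Ioo 0 1) := by fun_prop
  have ht : Tendsto (fun n : ℕ => 1/((n:ℝ)+2)) atTop (nhds 0) := by
    have := (tendsto_add_atTop_iff_nat 1).2 (tendsto_one_div_add_atTop_nhds_zero_nat (𝕜 := ℝ))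
    refine this.congr fun n => ?_
    push_cast; ring_nf
  refine integrableOn_Ioc_of_intervalIntegral_norm_bounded (l := atTop)
    (a := fun n : ℕ => 1/((n:ℝ)+2)) (b := fun n : ℕ => 1 - 1/((n:ℝ)+2)) (I := Real.exp (q*C) / q)
    ?_ ht (by simpa using ht.const_sub 1) (Eventually.of_forall ?_)
  · intro n
    exact ((hcont.mono (hsub n)).integrableOn_compact isCompact_Icc).mono_set Ioc_subset_Icc_self
  · intro n
    have e1 : (∫ x in Ioc (1/((n:ℝ)+2)) (1 - 1/((n:ℝ)+2)), ‖Real.exp (-(q * A x)) * k x‖)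
        = ∫ x in (1/((n:ℝ)+2))..(1 - 1/((n:ℝ)+2)), Real.exp (-(q * A x)) * k x := by
      rw [intervalIntegral.integral_of_le (hle n)]
      apply setIntegral_congr_fun measurableSet_Ioc
      intro v hv
      have := hkpos v (hsub n (Ioc_subset_Icc_self hv))
      simp only [Real.norm_eq_abs]
      rw [abs_of_pos]; positivity
    rw [e1, intervalIntegral.integral_eq_sub_of_hasDerivAt (f := fun v => -(Real.exp (-(q * A v)) / q))]
    · have h1 : 0 < Real.exp (-(q * A (1 - 1/((n:ℝ)+2)))) / q := by positivity
      have h2 : Real.exp (-(q * A (1/((n:ℝ)+2)))) / q ≤ Real.exp (q*C)/q := by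
        apply div_le_div_of_nonneg_right _ hq.le
        apply Real.exp_le_exp.2
        have := mul_le_mul_of_nonneg_left (hAC _ (hsub n ⟨le_rfl, hle n⟩)) hq.le
        linarith
      linarith
    · intro v hv
      rw [uIcc_of_le (hle n)] at hv
      have := ((((hA v (hsub n hv)).const_mul q).neg.exp).div_const q).neg
      have e : Real.exp (-(q * A v)) * k v = -(Real.exp (-(q * A v)) * -(q * k v) / q) := by
        field_simp
      rw [e]
      exact this
    · apply ContinuousOn.intervalIntegrable
      rw [uIcc_of_le (hle n)]
      exact hcont.mono (hsub n)

open Topology in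
lemma aux_main (g ρ : ℝ → ℝ) (θ : ℝ) (θf : ℝ → ℝ) (S : Set ℝ) (x : ℕ)
    (hS : OrdConnected S) (hS1 : Ioo 0 1 ⊆ S) (hS2 : S ⊆ Ico 0 1)
    (hρc : ContinuousOn ρ (Ico 0 1)) (hρ : ∀ v ∈ Ico (0:ℝ) 1, 0 < ρ v)
    (hg : ContinuousOn g S) (hθ : θ ∈ S) (hθf : ∀ q, 0 < q → θf q ∈ S ∧ θf q ≤ θ)
    (hgpos : ∀ w ∈ Ioo (0:ℝ) 1, θ < w → 0 ≤ g w)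
    (hgneg : ∀ w ∈ Ioo (0:ℝ) 1, w < θ → g w ≤ 0)
    (hgq : ∀ q, 0 < q → ∀ w ∈ Ioo (0:ℝ) 1, θf q < w → w < θ → 0 ≤ q + g w) :
    0 < (∫⁻ v in Ioo (0:ℝ) 1, ENNReal.ofReal (Real.exp (-∫ w in θ..v, g w / ρ w) * v ^ x / ρ v)) ∧
    Tendsto (fun q => ENNReal.ofReal (∫ v in Ioo (0:ℝ) 1,
        Real.exp (-∫ w in (θf q)..v, (q + g w) / ρ w) * v ^ x / ρ v)) (𝓝[>] 0)
      (𝓝 (∫⁻ v in Ioo (0:ℝ) 1, ENNReal.ofReal (Real.exp (-∫ w in θ..v, g w / ρ w) * v ^ x / ρ v))) := by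
  have hρi : ContinuousOn (fun w => 1 / ρ w) (Ico 0 1) :=
    continuousOn_const.div hρc fun v hv => (hρ v hv).ne'
  have hρS : ContinuousOn ρ S := hρc.mono hS2
  have hS0 : ∀ v ∈ S, ρ v ≠ 0 := fun v hv => (hρ v (hS2 hv)).ne'
  have hρ' : ∀ v ∈ Ioo (0:ℝ) 1, 0 < ρ v := fun v hv => hρ v (Ioo_subset_Ico_self hv)
  have hgρ : ContinuousOn (fun w => g w / ρ w) S := hg.div hρS hS0
  have hii : ∀ f : ℝ → ℝ, ContinuousOn f S → ∀ a ∈ S, ∀ b ∈ S, IntervalIntegrable f volume a b :=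
    fun f hf a ha b hb => (hf.mono (hS.uIcc_subset ha hb)).intervalIntegrable
  have hio : ∀ a ∈ S, ∀ b ∈ S, Ioo a b ⊆ Ioo 0 1 := fun a ha b hb w hw =>
    ⟨(hS2 ha).1.trans_lt hw.1, hw.2.trans (hS2 hb).2⟩
  have hI0 : ∀ a ∈ Ico (0:ℝ) 1, ∀ b ∈ Ico (0:ℝ) 1, IntervalIntegrable (fun w => 1 / ρ w) volume a b :=
    fun a ha b hb => (hρi.mono (ordConnected_Ico.uIcc_subset ha hb)).intervalIntegrable
  have h0 : (0:ℝ) ∈ Ico (0:ℝ) 1 := ⟨le_rfl, one_pos⟩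
  set J0 : ℝ → ℝ := fun v => -∫ w in θ..v, g w / ρ w with hJ0
  set A : ℝ → ℝ := fun v => ∫ w in θ..v, 1 / ρ w with hA
  set C : ℝ := ∫ w in (0:ℝ)..θ, 1 / ρ w with hC
  set B : ℝ → ℝ := fun q => ∫ w in (θf q)..θ, (q + g w) / ρ w with hB
  have hmonoC : ∀ a ∈ Ico (0:ℝ) 1, a ≤ θ → ∫ w in a..θ, 1 / ρ w ≤ C := by
    intro a ha haθ
    have h1 := intervalIntegral.integral_add_adjacent_intervals (hI0 0 h0 a ha) (hI0 a ha θ (hS2 hθ))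
    have h2 : 0 ≤ ∫ w in (0:ℝ)..a, 1 / ρ w := intervalIntegral.integral_nonneg ha.1 fun w hw =>
      (one_div_pos.2 (hρ w ⟨hw.1, hw.2.trans_lt ha.2⟩)).le
    linarith
  have hC0 : 0 ≤ C := intervalIntegral.integral_nonneg (hS2 hθ).1 fun w hw =>
      (one_div_pos.2 (hρ w ⟨hw.1, hw.2.trans_lt (hS2 hθ).2⟩)).le
  have hAC : ∀ v ∈ Ioo (0:ℝ) 1, -C ≤ A v := by
    intro v hv
    rcases le_total v θ with h | h
    · have := hmonoC v (Ioo_subset_Ico_self hv) h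
      simp only [hA]
      rw [intervalIntegral.integral_symm]; linarith
    · have : 0 ≤ A v := intervalIntegral.integral_nonneg h fun w hw =>
        (one_div_pos.2 (hρ w ⟨(hS2 hθ).1.trans hw.1, hw.2.trans_lt hv.2⟩)).le
      linarith
  have hBq : ∀ q : ℝ, 0 < q → 0 ≤ B q ∧ B q ≤ q * C := by
    intro q hq
    obtain ⟨h1, h2⟩ := hθf q hq
    have hi1 : IntervalIntegrable (fun w => (q + g w) / ρ w) volume (θf q) θ :=
      hii _ ((continuousOn_const.add hg).div hρS hS0) _ h1 _ hθ
    constructor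
    · have := intervalIntegral.integral_mono_on_of_le_Ioo h2 (f := fun _ => (0:ℝ))
        (by simp) hi1 (fun w hw => div_nonneg (hgq q hq w (hio _ h1 _ hθ hw) hw.1 hw.2)
          (hρ' w (hio _ h1 _ hθ hw)).le)
      simpa using this
    · have := intervalIntegral.integral_mono_on_of_le_Ioo h2 hi1
        ((hI0 _ (hS2 h1) _ (hS2 hθ)).const_mul q) (fun w hw => by
          have := hρ' w (hio _ h1 _ hθ hw)
          have := hgneg w (hio _ h1 _ hθ hw) hw.2
          rw [mul_one_div]
          apply div_le_div_of_nonneg_right _ (by positivity)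
          linarith)
      rw [intervalIntegral.integral_const_mul] at this
      exact this.trans (mul_le_mul_of_nonneg_left (hmonoC _ (hS2 h1) h2) hq.le)
  have hJneg : ∀ v ∈ Ioo (0:ℝ) 1, J0 v ≤ 0 := by
    intro v hv
    have hvS := hS1 hv
    rcases le_total v θ with h | h
    · have := intervalIntegral.integral_mono_on_of_le_Ioo h (g := fun _ => (0:ℝ))
        (hii _ hgρ _ hvS _ hθ) (by simp) (fun w hw => div_nonpos_of_nonpos_of_nonneg
          (hgneg w (hio _ hvS _ hθ hw) hw.2) (hρ' w (hio _ hvS _ hθ hw)).le)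
      simp only [hJ0]
      rw [intervalIntegral.integral_symm, neg_neg]
      simpa using this
    · have := intervalIntegral.integral_mono_on_of_le_Ioo h (f := fun _ => (0:ℝ))
        (by simp) (hii _ hgρ _ hθ _ hvS) (fun w hw => div_nonneg
          (hgpos w (hio _ hθ _ hvS hw) hw.1) (hρ' w (hio _ hθ _ hvS hw)).le)
      simp only [hJ0]
      simpa using this
  have hdec : ∀ q, 0 < q → ∀ v ∈ Ioo (0:ℝ) 1,
      (-∫ w in (θf q)..v, (q + g w) / ρ w) = J0 v - q * A v - B q := by
    intro q hq v hv
    obtain ⟨h1, h2⟩ := hθf q hq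
    have hc : ContinuousOn (fun w => (q + g w) / ρ w) S := (continuousOn_const.add hg).div hρS hS0
    have e1 := intervalIntegral.integral_add_adjacent_intervals (hii _ hc _ h1 _ hθ) (hii _ hc _ hθ _ (hS1 hv))
    have e2 : (∫ w in θ..v, (q + g w) / ρ w) = q * A v - J0 v := by
      simp only [hA, hJ0, sub_neg_eq_add]
      rw [← intervalIntegral.integral_const_mul, ← intervalIntegral.integral_add]
      · congr 1; ext w; ring
      · exact (hI0 _ (hS2 hθ) _ (Ioo_subset_Ico_self hv)).const_mul q
      · exact hii _ hgρ _ hθ _ (hS1 hv)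
    simp only [hB]
    linarith
  have hJd : ContinuousOn J0 (Ioo 0 1) := fun v hv =>
    (aux_hasDeriv _ S hS hS1 hgρ θ v hθ hv).neg.continuousAt.continuousWithinAt
  have hAd : ∀ v ∈ Ioo (0:ℝ) 1, HasDerivAt A (1 / ρ v) v := fun v hv =>
    aux_hasDeriv _ (Ico 0 1) ordConnected_Ico Ioo_subset_Ico_self hρi θ v (hS2 hθ) hv
  have hAc : ContinuousOn A (Ioo 0 1) := fun v hv => (hAd v hv).continuousAt.continuousWithinAt
  have hkρ : ContinuousOn (fun w => 1 / ρ w) (Ioo 0 1) := hρi.mono Ioo_subset_Ico_self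
  have hk : ContinuousOn (fun v => v ^ x / ρ v) (Ioo 0 1) :=
    (by fun_prop : ContinuousOn (fun v : ℝ => v ^ x) _).div (hρc.mono Ioo_subset_Ico_self)
      fun v hv => (hρ' v hv).ne'
  have hkpos : ∀ v ∈ Ioo (0:ℝ) 1, 0 < v ^ x / ρ v := fun v hv =>
    div_pos (pow_pos hv.1 x) (hρ' v hv)
  have hmain := aux_core J0 A _ B C hJd hAc hk hkpos hAC hBq
  simp only [mul_div_assoc]
  refine ⟨?_, ?_⟩
  · apply aux_pos
    · exact (Real.continuous_exp.comp_continuousOn hJd).mul hk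
    · intro v hv
      exact mul_pos (Real.exp_pos _) (hkpos v hv)
  · refine hmain.congr' ?_
    filter_upwards [self_mem_nhdsWithin] with q hq
    have e : (∫ v in Ioo (0:ℝ) 1, Real.exp (-∫ w in (θf q)..v, (q + g w) / ρ w) * (v ^ x / ρ v))
        = ∫ v in Ioo (0:ℝ) 1, Real.exp (J0 v - q * A v - B q) * (v ^ x / ρ v) := by
      apply setIntegral_congr_fun measurableSet_Ioo
      intro v hv
      simp only []
      rw [hdec q hq v hv]
    rw [e, ofReal_integral_eq_lintegral_ofReal]
    · have hint := aux_int A (fun w => 1 / ρ w) C q hq hAd hkρ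
        (fun v hv => one_div_pos.2 (hρ' v hv)) hAC
      refine Integrable.mono' hint ?_ ?_
      · refine ContinuousOn.aestronglyMeasurable ?_ measurableSet_Ioo
        fun_prop
      · filter_upwards [ae_restrict_mem measurableSet_Ioo] with v hv
        have hρv := hρ' v hv
        have hkv := hkpos v hv
        rw [Real.norm_eq_abs, abs_of_pos (by positivity)]
        apply mul_le_mul _ _ hkv.le (Real.exp_pos _).le
        · apply Real.exp_le_exp.2
          linarith [hJneg v hv, (hBq q hq).1]
        · exact div_le_div_of_nonneg_right (pow_le_one₀ hv.1.le hv.2.le) hρv.le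
    · filter_upwards [ae_restrict_mem measurableSet_Ioo] with v hv
      exact (mul_pos (Real.exp_pos _) (hkpos v hv)).le

lemma aux_summ (r : ℕ → ℝ) (hr : ∀ k, 0 ≤ r k) (hs : Summable r) (z : ℝ) (hz : z ∈ Icc (0:ℝ) 1) :
    Summable (fun k => r k * z ^ k) :=
  Summable.of_nonneg_of_le (fun k => mul_nonneg (hr k) (pow_nonneg hz.1 k))
    (fun k => mul_le_of_le_one_right (hr k) (pow_le_one₀ hz.1 hz.2)) hs

lemma aux_cont (r : ℕ → ℝ) (hr : ∀ k, 0 ≤ r k) (hs : Summable r) :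
    ContinuousOn (fun z : ℝ => ∑' k, r k * z ^ k) (Icc 0 1) := by
  refine continuousOn_tsum (fun k => by fun_prop) hs ?_
  intro k z hz
  rw [Real.norm_eq_abs, abs_of_nonneg (mul_nonneg (hr k) (pow_nonneg hz.1 k))]
  exact mul_le_of_le_one_right (hr k) (pow_le_one₀ hz.1 hz.2)

lemma aux_convex (rneg : ℝ) (hrneg : 0 ≤ rneg) (r : ℕ → ℝ) (hr : ∀ k, 0 ≤ r k) (hs : Summable r) :
    ConvexOn ℝ (Ioc 0 1) (rtilde rneg r) := by
  have h1 : ConvexOn ℝ (Ioc (0:ℝ) 1) (fun z => rneg / z) := by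
    have : ConvexOn ℝ (Ioc (0:ℝ) 1) (fun z : ℝ => z ^ (-1 : ℤ)) :=
      (convexOn_zpow (-1)).subset Ioc_subset_Ioi_self (convex_Ioc 0 1)
    have := this.smul hrneg
    refine this.congr fun z hz => ?_
    simp [div_eq_mul_inv]
  have h2 : ConvexOn ℝ (Ioc (0:ℝ) 1) (fun z => ∑' k, r k * z ^ k) := by
    refine ⟨convex_Ioc 0 1, ?_⟩
    intro a ha b hb s t hs' ht hst
    have hab := convex_Ioc 0 1 ha hb hs' ht hst
    simp only [smul_eq_mul] at hab ⊢
    have sa := (aux_summ r hr hs a ⟨ha.1.le, ha.2⟩).mul_left s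
    have sb := (aux_summ r hr hs b ⟨hb.1.le, hb.2⟩).mul_left t
    rw [← tsum_mul_left, ← tsum_mul_left, ← sa.tsum_add sb]
    refine (aux_summ r hr hs _ ⟨hab.1.le, hab.2⟩).tsum_le_tsum (fun k => ?_) (sa.add sb)
    have := (convexOn_pow k (𝕜 := ℝ)).2 ha.1.le hb.1.le hs' ht hst
    simp only [smul_eq_mul] at this
    have := mul_le_mul_of_nonneg_left this (hr k)
    linarith
  exact h1.add h2

/-- assume `μ > 0`, `φ* = 1` and `θ < 1`. For every `x ∈ ℕ`,
`lim_{q↓0} Φ_q(x)/q = ∫_0^1 exp{-∫_θ^v μ(1-r̃(w))/(λ(p̃(w)-w)) dw} v^x/(λ(p̃(v)-v)) dv`,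
both sides taking values in `(0,∞]` (formalized in `ℝ≥0∞` via `ENNReal.ofReal`). -/
theorem stmt16 (lam mu rneg : ℝ) (p r : ℕ → ℝ) (φ θ : ℝ) (θf : ℝ → ℝ)
    (hlam : 0 < lam)
    (hp : ∀ k, 0 ≤ p k) (hpsum : ∑' k, p k = 1) (hp0 : 0 < p 0) (hp1 : p 1 = 0)
    (hφ0 : 0 < φ) (hφfix : ptilde p φ = φ)
    (hφlo : ∀ z : ℝ, 0 < z → z < φ → z < ptilde p z)
    (hφeq : φ = 1)
    (hmu : 0 < mu) (hrneg : 0 ≤ rneg) (hr : ∀ k, 0 ≤ r k) (hr0 : r 0 = 0)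
    (hrsum : rneg + ∑' k, r k = 1)
    (hθfpos : 0 < mu * rneg → ∀ q : ℝ, 0 < q →
      θf q ∈ Set.Ioo (0:ℝ) 1 ∧ q = mu * (rtilde rneg r (θf q) - 1))
    (hθfzero : mu * rneg = 0 → ∀ q : ℝ, 0 < q → θf q = 0)
    (hθpos : 0 < mu * rneg → θ ∈ Set.Ioc (0:ℝ) 1 ∧ rtilde rneg r θ = 1 ∧
      ∀ z ∈ Set.Ioc (0:ℝ) 1, rtilde rneg r z = 1 → θ ≤ z)
    (hθzero : mu * rneg = 0 → θ = 0)
    (hθlt : θ < 1) :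
    ∀ x : ℕ,
      0 < (∫⁻ v in Set.Ioo (0:ℝ) 1,
          ENNReal.ofReal (Real.exp (-∫ w in θ..v, mu * (1 - rtilde rneg r w)
              / (lam * (ptilde p w - w)))
            * v ^ x / (lam * (ptilde p v - v)))) ∧
      Filter.Tendsto (fun q =>
          ENNReal.ofReal (Phi lam mu p rneg r φ (θf q) q x / q))
        (nhdsWithin 0 (Set.Ioi 0))
        (nhds (∫⁻ v in Set.Ioo (0:ℝ) 1,
          ENNReal.ofReal (Real.exp (-∫ w in θ..v, mu * (1 - rtilde rneg r w)
              / (lam * (ptilde p w - w)))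
            * v ^ x / (lam * (ptilde p v - v))))) := by
  intro x
  subst hφeq
  have hps : Summable p := by
    by_contra h
    rw [tsum_eq_zero_of_not_summable h] at hpsum
    norm_num at hpsum
  set ρ : ℝ → ℝ := fun w => lam * (ptilde p w - w) with hρdef
  have hρ : ∀ v ∈ Ico (0:ℝ) 1, 0 < ρ v := by
    intro v hv
    refine mul_pos hlam (sub_pos.2 ?_)
    rcases hv.1.eq_or_lt with h | h
    · rw [← h]
      have : ptilde p 0 = p 0 := by
        unfold ptilde
        rw [tsum_eq_single 0]
        · simp
        · intro k hk; simp [hk]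
      rw [this]; exact hp0
    · exact hφlo v h hv.2
  have hρc : ContinuousOn ρ (Ico 0 1) := by
    have : ContinuousOn (ptilde p) (Ico 0 1) := (aux_cont p hp hps).mono Ico_subset_Icc_self
    exact continuousOn_const.mul (this.sub continuousOn_id)
  have key : ∃ S : Set ℝ, OrdConnected S ∧ Ioo 0 1 ⊆ S ∧ S ⊆ Ico 0 1 ∧
      ContinuousOn (fun w => mu * (1 - rtilde rneg r w)) S ∧ θ ∈ S ∧
      (∀ q, 0 < q → θf q ∈ S ∧ θf q ≤ θ) ∧
      (∀ w ∈ Ioo (0:ℝ) 1, θ < w → 0 ≤ mu * (1 - rtilde rneg r w)) ∧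
      (∀ w ∈ Ioo (0:ℝ) 1, w < θ → mu * (1 - rtilde rneg r w) ≤ 0) ∧
      (∀ q, 0 < q → ∀ w ∈ Ioo (0:ℝ) 1, θf q < w → w < θ → 0 ≤ q + mu * (1 - rtilde rneg r w)) := by
    rcases hrneg.eq_or_lt with h | h
    · subst h
      have hθ0 := hθzero (by simp)
      have hθf0 := hθfzero (by simp)
      subst hθ0
      have hrs : Summable r := by
        by_contra h
        rw [tsum_eq_zero_of_not_summable h] at hrsum
        norm_num at hrsum
      have hrt : rtilde 0 r = fun z => ∑' k, r k * z ^ k := by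
        funext z; simp [rtilde]
      rw [hrt]
      refine ⟨Ico 0 1, ordConnected_Ico, Ioo_subset_Ico_self, Subset.rfl, ?_, ⟨le_rfl, one_pos⟩,
        ?_, ?_, ?_, ?_⟩
      · exact continuousOn_const.mul (continuousOn_const.sub
          ((aux_cont r hr hrs).mono Ico_subset_Icc_self))
      · intro q hq
        rw [hθf0 q hq]
        exact ⟨⟨le_rfl, one_pos⟩, le_rfl⟩
      · intro w hw _
        refine mul_nonneg hmu.le (sub_nonneg.2 ?_)
        have : ∑' k, r k * w ^ k ≤ ∑' k, r k :=
          (aux_summ r hr hrs w ⟨hw.1.le, hw.2.le⟩).tsum_le_tsum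
            (fun k => mul_le_of_le_one_right (hr k) (pow_le_one₀ hw.1.le hw.2.le)) hrs
        linarith
      · intro w hw h; exact absurd h (not_lt.2 hw.1.le)
      · intro q _ w hw _ h; exact absurd h (not_lt.2 hw.1.le)
    · have hmr : 0 < mu * rneg := mul_pos hmu h
      obtain ⟨hθm, hθr, hθmin⟩ := hθpos hmr
      have hθf' := hθfpos hmr
      have hrt1 : rtilde rneg r 1 = 1 := by simp [rtilde, hrsum]
      by_cases hrs : Summable r
      swap
      · exfalso
        rw [tsum_eq_zero_of_not_summable hrs] at hrsum
        have hn : 0 ≤ ∑' k, r k * θ ^ k :=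
          tsum_nonneg fun k => mul_nonneg (hr k) (pow_nonneg hθm.1.le k)
        have h1 : rneg = 1 := by linarith
        have h2 : 1 < 1 / θ := (one_lt_div hθm.1).2 hθlt
        unfold rtilde at hθr
        rw [h1] at hθr
        linarith
      have hcv := aux_convex rneg hrneg r hr hrs
      have h1m : (1:ℝ) ∈ Ioc (0:ℝ) 1 := ⟨one_pos, le_rfl⟩
      have hup : ∀ w ∈ Ioo (0:ℝ) 1, θ ≤ w → rtilde rneg r w ≤ 1 := by
        intro w hw hθw
        have := hcv.le_max_of_mem_Icc hθm h1m ⟨hθw, hw.2.le⟩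
        simpa [hθr, hrt1] using this
      have hlo : ∀ w ∈ Ioo (0:ℝ) 1, w < θ → 1 ≤ rtilde rneg r w := by
        intro w hw hwθ
        by_contra! hlt
        have hwm : w ∈ Ioc (0:ℝ) 1 := ⟨hw.1, hw.2.le⟩
        have := hcv.lt_right_of_left_lt hwm h1m (z := θ) (by
          rw [openSegment_eq_Ioo hw.2]; exact ⟨hwθ, hθlt⟩) (by rw [hθr]; exact hlt)
        rw [hθr, hrt1] at this
        exact lt_irrefl _ this
      have hθfle : ∀ q, 0 < q → θf q ≤ θ := by
        intro q hq
        obtain ⟨h1, h2⟩ := hθf' q hq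
        by_contra! hlt
        have := hup _ h1 hlt.le
        nlinarith
      refine ⟨Ioo 0 1, ordConnected_Ioo, Subset.rfl, Ioo_subset_Ico_self, ?_, ⟨hθm.1, hθlt⟩,
        ?_, ?_, ?_, ?_⟩
      · have : ContinuousOn (rtilde rneg r) (Ioo 0 1) :=
          (continuousOn_const.div continuousOn_id fun w hw => hw.1.ne').add
            ((aux_cont r hr hrs).mono Ioo_subset_Icc_self)
        exact continuousOn_const.mul (continuousOn_const.sub this)
      · intro q hq
        exact ⟨(hθf' q hq).1, hθfle q hq⟩
      · intro w hw hw2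
        exact mul_nonneg hmu.le (sub_nonneg.2 (hup w hw hw2.le))
      · intro w hw hw2
        exact mul_nonpos_of_nonneg_of_nonpos hmu.le (sub_nonpos.2 (hlo w hw hw2))
      · intro q hq w hw hw1 hw2
        obtain ⟨h1, h2⟩ := hθf' q hq
        have h3 := hcv.le_max_of_mem_Icc ⟨h1.1, h1.2.le⟩ hθm ⟨hw1.le, hw2.le⟩
        have h4 := hlo _ h1 (hw1.trans hw2)
        rw [hθr, max_eq_left h4] at h3
        nlinarith
  obtain ⟨S, hS, hS1, hS2, hg, hθS, hθfS, hgpos, hgneg, hgq⟩ := key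
  have := aux_main (fun w => mu * (1 - rtilde rneg r w)) ρ θ θf S x hS hS1 hS2 hρc hρ hg hθS hθfS
    hgpos hgneg hgq
  refine ⟨this.1, this.2.congr' ?_⟩
  filter_upwards [self_mem_nhdsWithin] with q hq
  have hq' : q ≠ 0 := ne_of_gt hq
  congr 1
  unfold Phi
  rw [mul_div_cancel_left₀ _ hq', intervalIntegral.integral_of_le zero_le_one,
    integral_Ioc_eq_integral_Ioo]
  apply setIntegral_congr_fun measurableSet_Ioo
  intro v hv
  have e : (∫ w in (θf q)..v, (q + mu * (1 - rtilde rneg r w)) / ρ w)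
      = ∫ w in (θf q)..v, (q + mu * (1 - rtilde rneg r w)) / (lam * |ptilde p w - w|) := by
    apply intervalIntegral.integral_congr
    intro w hw
    have hw' := hS2 (hS.uIcc_subset (hθfS q hq).1 (hS1 hv) hw)
    have := pos_of_mul_pos_right (hρ w hw') hlam.le
    simp only [hρdef]
    rw [abs_of_pos this]
  have hv' := pos_of_mul_pos_right (hρ v (Ioo_subset_Ico_self hv)) hlam.le
  simp only []
  rw [e, abs_of_pos hv']
  simp only [hρdef]
  ring
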